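/- Let d ≥ 1, let J_d(u) = ∫_{‖x‖≤1} e^{−i⟨u,x⟩} dx for u ∈ ℝ^d, and let S be the measure on ℝ^d with density u ↦ J_d(u)² with respect to Lebesgue measure. Let ρ > 2. Then for every bounded measurable f : ℝ^d → ℂ with support contained in the closed ball B(0, ρ−2) which is not Lebesgue-almost everywhere zero, and every bounded measurable compactly supported h : ℝ^d → ℂ with support contained in ℝ^d ∖ B(0,ρ), one has ∫_{ℝ^d} f̂(u)·conj(ĥ(u))·J_d(u)² du = 0, and hence ∫_{ℝ^d} |f̂(u) − ĥ(u)|² J_d(u)² du ≥ ∫_{ℝ^d} |f̂(u)|² J_d(u)² du > 0. In particular, S does not induce linear maximal rigidity on B(0,ρ). -/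

import Mathlib

open MeasureTheory Complex
open scoped RealInnerProductSpace

noncomputable section

abbrev Ed (d : ℕ) := EuclideanSpace ℝ (Fin d)

/-- Fourier transform `f̂(u) = ∫ e^{-i⟨u,x⟩} f(x) dx`. -/
def FT {d : ℕ} (f : Ed d → ℂ) (u : Ed d) : ℂ :=
  ∫ x : Ed d, Complex.exp (-Complex.I * (⟪u, x⟫ : ℝ)) * f x

/-- `f` is bounded, measurable, with bounded support contained in `A`. -/
def IsCBS {d : ℕ} (A : Set (Ed d)) (f : Ed d → ℂ) : Prop :=
  Measurable f ∧ (∃ C : ℝ, ∀ x, ‖f x‖ ≤ C) ∧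
    Bornology.IsBounded (Function.support f) ∧ Function.support f ⊆ A

/-- `S` induces linear maximal rigidity on `A`. -/
def LMR {d : ℕ} (S : Measure (Ed d)) (A : Set (Ed d)) : Prop :=
  ∀ f : Ed d → ℂ, IsCBS A f → ∀ ε : ℝ, 0 < ε →
    ∃ h : Ed d → ℂ, IsCBS Aᶜ h ∧ (∫ u, ‖FT f u - FT h u‖ ^ 2 ∂S) < ε

/-- `J_d(u) = ∫_{‖x‖≤1} e^{-i⟨u,x⟩} dx`, the Fourier transform of the indicator of the
closed unit ball; the integral is real-valued, so we record its real part. -/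
def Jd (d : ℕ) (u : Ed d) : ℝ :=
  (∫ x in Metric.closedBall (0 : Ed d) 1, Complex.exp (-Complex.I * (⟪u, x⟫ : ℝ))).re

open FourierTransform SchwartzMap in
lemma aux_fourier_ae {d : ℕ} {f : Ed d → ℂ} (h1 : Integrable f) (h2 : MemLp f 2) :
    (fun u => 𝓕 f u) =ᵐ[volume] ((𝓕 (h2.toLp f) : Lp (α := Ed d) ℂ 2 volume) : Ed d → ℂ) := by
  have hcont : Continuous (𝓕 f) :=
    VectorFourier.fourierIntegral_continuous Real.continuous_fourierChar
      (by exact continuous_inner) h1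
  apply ae_eq_of_integral_contDiff_smul_eq hcont.locallyIntegrable
    ((Lp.memLp _).locallyIntegrable (by norm_num))
  intro g hg1 hg2
  have hg2' : HasCompactSupport (fun x => (g x : ℂ)) := hg2.comp_left (g := Complex.ofReal) rfl
  let φ : 𝓢(Ed d, ℂ) := hg2'.toSchwartzMap (Complex.ofRealCLM.contDiff.comp hg1)
  have hφ : ∀ x, φ x = (g x : ℂ) := fun x => rfl
  have e1 : ∫ x, 𝓕 φ x • f x = ∫ x, φ x • 𝓕 f x := by
    rw [SchwartzMap.fourier_coe]
    have := VectorFourier.integral_fourierIntegral_smul_eq_flip (μ := (volume : Measure (Ed d)))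
      (ν := (volume : Measure (Ed d))) (L := innerₗ (Ed d)) (f := φ) (g := f)
      Real.continuous_fourierChar (by exact continuous_inner) (φ.integrable (μ := volume)) h1
    rw [flip_innerₗ] at this
    exact this
  have e2 : ∫ x, φ x • (𝓕 (h2.toLp f) : Lp (α := Ed d) ℂ 2 volume) x = ∫ x, 𝓕 φ x • f x := by
    rw [← Lp.toTemperedDistribution_apply, ← Lp.fourier_toTemperedDistribution_eq,
      TemperedDistribution.fourier_apply, Lp.toTemperedDistribution_apply]
    apply integral_congr_ae
    filter_upwards [MemLp.coeFn_toLp h2] with x hx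
    rw [hx]
  have := (e2.trans e1).symm
  simpa [hφ] using this

/-- integrable and bounded -/
def IB {d : ℕ} (f : Ed d → ℂ) : Prop := Integrable f ∧ ∃ C : ℝ, ∀ x, ‖f x‖ ≤ C

lemma IB.memLp {d : ℕ} {f : Ed d → ℂ} (h : IB f) : MemLp f 2 := by
  obtain ⟨h1, C, hC⟩ := h
  rw [memLp_two_iff_integrable_sq_norm h1.1]
  refine (h1.norm.const_mul C).mono' (h1.1.norm.pow 2) (ae_of_all _ fun x => ?_)
  rw [Real.norm_of_nonneg (by positivity), sq]
  exact mul_le_mul_of_nonneg_right (hC x) (norm_nonneg _)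

open FourierTransform in
lemma FT_eq {d : ℕ} (f : Ed d → ℂ) (u : Ed d) :
    FT f u = 𝓕 f ((2 * Real.pi)⁻¹ • u) := by
  rw [Real.fourier_eq']
  unfold FT
  congr 1 with x
  rw [inner_smul_right, real_inner_comm, smul_eq_mul]
  congr 2
  have : (Real.pi : ℂ) ≠ 0 := by exact_mod_cast Real.pi_ne_zero
  push_cast
  field_simp

lemma FT_cont {d : ℕ} {f : Ed d → ℂ} (h : Integrable f) : Continuous (FT f) := by
  have hcont : Continuous (FourierTransform.fourier f : Ed d → ℂ) :=
    VectorFourier.fourierIntegral_continuous Real.continuous_fourierChar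
      (by exact continuous_inner) h
  have : FT f = fun u => (FourierTransform.fourier f : Ed d → ℂ) ((2 * Real.pi)⁻¹ • u) :=
    funext (FT_eq f)
  rw [this]
  exact hcont.comp (continuous_const_smul _)

open FourierTransform in
lemma fourier_memLp {d : ℕ} {f : Ed d → ℂ} (h : IB f) : MemLp (fun u => 𝓕 f u) 2 :=
  (memLp_congr_ae (aux_fourier_ae h.1 h.memLp)).2 (Lp.memLp _)

lemma FT_sq_int {d : ℕ} {f : Ed d → ℂ} (h : IB f) : Integrable (fun u => ‖FT f u‖ ^ 2) := by
  have h1 := (memLp_two_iff_integrable_sq_norm (fourier_memLp h).1).1 (fourier_memLp h)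
  have := h1.comp_smul (R := (2 * Real.pi)⁻¹) (by positivity)
  simpa [FT_eq] using this

lemma FT_memLp {d : ℕ} {f : Ed d → ℂ} (h : IB f) : MemLp (FT f) 2 :=
  (memLp_two_iff_integrable_sq_norm (FT_cont h.1).aestronglyMeasurable).2 (FT_sq_int h)

open FourierTransform in
lemma plancherel {d : ℕ} {f g : Ed d → ℂ} (hf : IB f) (hg : IB g) :
    ∫ u, FT f u * (starRingEnd ℂ) (FT g u) =
      (2 * Real.pi) ^ d • ∫ x, f x * (starRingEnd ℂ) (g x) := by
  simp_rw [FT_eq]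
  rw [Measure.integral_comp_inv_smul_of_nonneg volume
    (fun u => 𝓕 f u * (starRingEnd ℂ) (𝓕 g u)) (by positivity)]
  rw [finrank_euclideanSpace_fin]
  congr 1
  have := Lp.inner_fourier_eq (hg.memLp.toLp g) (hf.memLp.toLp f)
  rw [L2.inner_def, L2.inner_def] at this
  have e1 : ∫ u, 𝓕 f u * (starRingEnd ℂ) (𝓕 g u) = ∫ u, inner ℂ
      ((𝓕 (hg.memLp.toLp g) : Lp (α := Ed d) ℂ 2 volume) u) ((𝓕 (hf.memLp.toLp f) : Lp (α := Ed d) ℂ 2 volume) u) := by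
    apply integral_congr_ae
    filter_upwards [aux_fourier_ae hf.1 hf.memLp, aux_fourier_ae hg.1 hg.memLp] with x h1 h2
    rw [← h1, ← h2]; rfl
  rw [e1, this]
  apply integral_congr_ae
  filter_upwards [hf.memLp.coeFn_toLp, hg.memLp.coeFn_toLp] with x h1 h2
  rw [h1, h2]; rfl

lemma ae_zero_of_FT {d : ℕ} {f : Ed d → ℂ} (hf : IB f) (h0 : ∀ u, FT f u = 0) :
    f =ᵐ[volume] 0 := by
  have h := plancherel hf hf
  simp only [h0, zero_mul, integral_zero] at h
  have h1 : ∫ x, f x * (starRingEnd ℂ) (f x) = 0 := by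
    have := smul_eq_zero.1 h.symm
    refine this.resolve_left (by positivity)
  have h2 : ∫ x, ‖f x‖ ^ 2 = 0 := by
    have : ∫ x, ((‖f x‖ ^ 2 : ℝ) : ℂ) = 0 := by
      rw [← h1]; congr 1 with x; rw [Complex.mul_conj, Complex.normSq_eq_norm_sq]
    rw [integral_complex_ofReal] at this
    exact_mod_cast this
  rw [integral_eq_zero_iff_of_nonneg (fun x => by positivity)
    ((memLp_two_iff_integrable_sq_norm hf.1.1).1 hf.memLp)] at h2
  filter_upwards [h2] with x hx
  simpa using hx

/-- indicator of the closed unit ball -/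
def oneB (d : ℕ) : Ed d → ℂ := (Metric.closedBall (0 : Ed d) 1).indicator (fun _ => (1 : ℂ))

lemma IB_of_bdd {d : ℕ} {f : Ed d → ℂ} (hm : Measurable f) (hb : ∃ C : ℝ, ∀ x, ‖f x‖ ≤ C)
    (hs : Bornology.IsBounded (Function.support f)) : IB f := by
  refine ⟨?_, hb⟩
  obtain ⟨C, hC⟩ := hb
  obtain ⟨R, hR⟩ := hs.subset_closedBall 0
  rw [← integrableOn_iff_integrable_of_support_subset hR]
  exact Measure.integrableOn_of_bounded (M := C) measure_closedBall_lt_top.ne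
    hm.aestronglyMeasurable (ae_of_all _ hC)

lemma oneB_IB (d : ℕ) : IB (oneB d) := by
  refine IB_of_bdd (measurable_const.indicator measurableSet_closedBall) ⟨1, fun x => ?_⟩
    (Metric.isBounded_closedBall.subset Set.support_indicator_subset)
  unfold oneB
  by_cases h : x ∈ Metric.closedBall (0 : Ed d) 1 <;> simp only [Set.indicator, h] <;> simp

lemma FT_oneB {d : ℕ} (u : Ed d) :
    FT (oneB d) u = ∫ x in Metric.closedBall (0 : Ed d) 1,
      Complex.exp (-Complex.I * (⟪u, x⟫ : ℝ)) := by
  unfold FT oneB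
  rw [← integral_indicator measurableSet_closedBall]
  congr 1 with x
  by_cases h : x ∈ Metric.closedBall (0 : Ed d) 1 <;> simp only [Set.indicator, h] <;> simp

lemma Jd_eq {d : ℕ} (u : Ed d) : ((Jd d u : ℝ) : ℂ) = FT (oneB d) u := by
  have h : Jd d u = (FT (oneB d) u).re := by rw [FT_oneB]; rfl
  rw [h]
  apply Complex.conj_eq_iff_re.1
  unfold FT
  rw [← integral_conj, ← integral_neg_eq_self]
  congr 1 with x
  have : oneB d (-x) = oneB d x := by simp [oneB, Set.indicator]
  rw [this, map_mul, ← Complex.exp_conj]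
  congr 1
  · congr 1
    simp
  · unfold oneB
    by_cases h : x ∈ Metric.closedBall (0 : Ed d) 1 <;> simp only [Set.indicator, h] <;> simp

lemma FT_bdd {d : ℕ} (f : Ed d → ℂ) (u : Ed d) : ‖FT f u‖ ≤ ∫ x, ‖f x‖ := by
  unfold FT
  refine (norm_integral_le_integral_norm _).trans (le_of_eq ?_)
  congr 1 with x
  rw [norm_mul, Complex.norm_exp]
  simp

open Convolution in
/-- convolution with the indicator -/
def cv {d : ℕ} (f : Ed d → ℂ) : Ed d → ℂ := f ⋆[ContinuousLinearMap.mul ℂ ℂ, volume] (oneB d)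

lemma cv_IB {d : ℕ} {f : Ed d → ℂ} (h : IB f) : IB (cv f) := by
  refine ⟨h.1.integrable_convolution _ (oneB_IB d).1, ∫ x, ‖f x‖, fun x => ?_⟩
  unfold cv
  rw [convolution_def]
  refine norm_integral_le_of_norm_le h.1.norm (ae_of_all _ fun t => ?_)
  have : ‖oneB d (x - t)‖ ≤ 1 := by
    unfold oneB
    by_cases h : x - t ∈ Metric.closedBall (0 : Ed d) 1 <;> simp only [Set.indicator, h] <;> simp
  simp only [ContinuousLinearMap.mul_apply', norm_mul]
  exact mul_le_of_le_one_right (norm_nonneg _) this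

lemma FT_cv {d : ℕ} {f : Ed d → ℂ} (h : IB f) (u : Ed d) :
    FT (cv f) u = FT f u * ((Jd d u : ℝ) : ℂ) := by
  rw [Jd_eq, FT_eq, FT_eq, FT_eq]
  exact Real.fourier_mul_convolution_eq h.1 (oneB_IB d).1 _

lemma cv_supp {d : ℕ} {f : Ed d → ℂ} {x : Ed d} (hx : cv f x ≠ 0) :
    ∃ a, f a ≠ 0 ∧ ‖x - a‖ ≤ 1 := by
  have := support_convolution_subset _ (show x ∈ Function.support (cv f) from hx)
  obtain ⟨a, ha, b, hb, rfl⟩ := Set.mem_add.1 this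
  refine ⟨a, ha, ?_⟩
  have := Set.support_indicator_subset hb
  simpa using this

lemma orth {d : ℕ} {f h : Ed d → ℂ} {ρ : ℝ} (hf : IB f) (hh : IB h)
    (hf_supp : Function.support f ⊆ Metric.closedBall (0 : Ed d) (ρ - 2))
    (hh_supp : Function.support h ⊆ (Metric.closedBall (0 : Ed d) ρ)ᶜ) :
    (∫ u, FT f u * (starRingEnd ℂ) (FT h u) * ((Jd d u : ℝ) : ℂ) ^ 2 ∂volume) = 0 := by
  have := plancherel (cv_IB hf) (cv_IB hh)
  simp only [FT_cv hf, FT_cv hh] at this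
  have h0 : ∀ x, cv f x * (starRingEnd ℂ) (cv h x) = 0 := by
    intro x
    by_contra hne
    obtain ⟨h1, h2⟩ := mul_ne_zero_iff.1 hne
    obtain ⟨a, ha, hxa⟩ := cv_supp h1
    obtain ⟨b, hb, hxb⟩ := cv_supp (f := h) (x := x) (fun hz => h2 (by simp [hz]))
    have ha' := hf_supp ha
    have hb' := hh_supp hb
    simp only [Metric.mem_closedBall, dist_zero_right, Set.mem_compl_iff, not_le] at ha' hb'
    have e : b = a + (x - a) - (x - b) := by abel
    have := norm_sub_le (a + (x - a)) (x - b)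
    rw [← e] at this
    have := norm_add_le a (x - a)
    linarith
  simp only [h0, integral_zero, smul_zero] at this
  rw [← this]
  congr 1 with u
  simp only [map_mul, Complex.conj_ofReal]
  ring

lemma Jd_cont (d : ℕ) : Continuous (Jd d) := by
  have : Jd d = fun u => (FT (oneB d) u).re := by
    funext u; rw [← Jd_eq]; simp
  rw [this]
  exact Complex.continuous_re.comp (FT_cont (oneB_IB d).1)

lemma int_sq {d : ℕ} {f : Ed d → ℂ} (hf : IB f) :
    Integrable (fun u => ‖FT f u‖ ^ 2 * Jd d u ^ 2) := by
  have := FT_sq_int (cv_IB hf)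
  simpa [FT_cv hf, mul_pow] using this

lemma FT_sub {d : ℕ} {f h : Ed d → ℂ} (hf : IB f) (hh : IB h) (u : Ed d) :
    FT (f - h) u = FT f u - FT h u := by
  have key : ∀ {g : Ed d → ℂ}, IB g →
      Integrable (fun x => Complex.exp (-Complex.I * (⟪u, x⟫ : ℝ)) * g x) := by
    intro g hg
    refine hg.1.bdd_mul (c := 1) (by fun_prop) (ae_of_all _ fun x => ?_)
    rw [Complex.norm_exp]; simp
  unfold FT
  rw [← integral_sub (key hf) (key hh)]
  congr 1 with x
  simp [mul_sub]

lemma IB.sub {d : ℕ} {f h : Ed d → ℂ} (hf : IB f) (hh : IB h) : IB (f - h) := by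
  obtain ⟨h1, C, hC⟩ := hf
  obtain ⟨h2, D, hD⟩ := hh
  exact ⟨h1.sub h2, C + D, fun x => (norm_sub_le _ _).trans (add_le_add (hC x) (hD x))⟩

lemma ineq {d : ℕ} {f h : Ed d → ℂ} (hf : IB f) (hh : IB h)
    (h0 : (∫ u, FT f u * (starRingEnd ℂ) (FT h u) * ((Jd d u : ℝ) : ℂ) ^ 2 ∂volume) = 0) :
    (∫ u, ‖FT f u‖ ^ 2 * Jd d u ^ 2 ∂volume)
          ≤ ∫ u, ‖FT f u - FT h u‖ ^ 2 * Jd d u ^ 2 ∂volume := by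
  have i1 := int_sq hf
  have i2 := int_sq hh
  have i3 : Integrable (fun u => ‖FT f u - FT h u‖ ^ 2 * Jd d u ^ 2) := by
    simpa [FT_sub hf hh] using int_sq (hf.sub hh)
  have id : ∀ u, (FT f u * (starRingEnd ℂ) (FT h u) * ((Jd d u : ℝ) : ℂ) ^ 2).re * 2 =
      ‖FT f u‖ ^ 2 * Jd d u ^ 2 + ‖FT h u‖ ^ 2 * Jd d u ^ 2
        - ‖FT f u - FT h u‖ ^ 2 * Jd d u ^ 2 := by
    intro u
    rw [← Complex.ofReal_pow, Complex.re_mul_ofReal, ← Complex.normSq_eq_norm_sq,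
      ← Complex.normSq_eq_norm_sq, ← Complex.normSq_eq_norm_sq, Complex.normSq_sub]
    ring
  have hJ : Continuous (Jd d) := Jd_cont d
  have c1 := FT_cont hf.1
  have c2 := FT_cont hh.1
  have i4 : Integrable
      (fun u => FT f u * (starRingEnd ℂ) (FT h u) * ((Jd d u : ℝ) : ℂ) ^ 2) := by
    refine (i1.add i2).mono' ?_ (ae_of_all _ fun u => ?_)
    · apply Continuous.aestronglyMeasurable
      fun_prop
    · simp only [norm_mul, norm_pow, RCLike.norm_conj, Complex.norm_real, Pi.add_apply]
      rw [Real.norm_eq_abs, sq_abs, ← add_mul]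
      refine mul_le_mul_of_nonneg_right ?_ (sq_nonneg _)
      nlinarith [sq_nonneg (‖FT f u‖ - ‖FT h u‖), sq_nonneg (‖FT f u‖), sq_nonneg (‖FT h u‖)]
  have h1 : ∫ u, (FT f u * (starRingEnd ℂ) (FT h u) * ((Jd d u : ℝ) : ℂ) ^ 2).re * 2 = 0 := by
    rw [integral_mul_const]
    have := integral_re i4
    simp only [RCLike.re_to_complex] at this
    rw [this, h0]; simp
  simp_rw [id] at h1
  rw [integral_sub (by exact i1.add i2) i3, integral_add i1 i2] at h1
  have : 0 ≤ ∫ u, ‖FT h u‖ ^ 2 * Jd d u ^ 2 := integral_nonneg fun u => by positivity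
  linarith

lemma FT_line {d : ℕ} {f : Ed d → ℂ} {R : ℝ} (hR : 0 ≤ R) (hf : IB f)
    (hs : Function.support f ⊆ Metric.closedBall (0 : Ed d) R) (u : Ed d) :
    Differentiable ℂ
      (fun z : ℂ => ∫ x, Complex.exp (-Complex.I * z * (⟪u, x⟫ : ℝ)) * f x) := by
  intro z₀
  have hm := hf.1.1
  have key := hasDerivAt_integral_of_dominated_loc_of_deriv_le (μ := (volume : Measure (Ed d)))
    (𝕜 := ℂ) (x₀ := z₀) (s := Metric.ball z₀ 1)
    (F := fun z x => Complex.exp (-Complex.I * z * (⟪u, x⟫ : ℝ)) * f x)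
    (F' := fun z x => Complex.exp (-Complex.I * z * (⟪u, x⟫ : ℝ)) *
      (-Complex.I * (⟪u, x⟫ : ℝ)) * f x)
    (bound := fun x => Real.exp ((‖z₀‖ + 1) * (‖u‖ * R)) * (‖u‖ * R) * ‖f x‖)
    (Metric.ball_mem_nhds _ one_pos) ?_ ?_ ?_ ?_ ?_ ?_
  · exact key.2.differentiableAt
  · refine Filter.Eventually.of_forall fun z => ?_
    exact (Continuous.aestronglyMeasurable (by fun_prop)).mul hm
  · refine (hf.1.norm.const_mul (Real.exp (‖z₀‖ * (‖u‖ * R)))).mono'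
      ((Continuous.aestronglyMeasurable (by fun_prop)).mul hm) (ae_of_all _ fun x => ?_)
    rw [norm_mul]
    by_cases hx : f x = 0
    · simp [hx]
    refine mul_le_mul_of_nonneg_right ?_ (norm_nonneg _)
    have hxR : ‖x‖ ≤ R := by simpa using hs hx
    refine (Complex.norm_exp_le_exp_norm _).trans (Real.exp_le_exp.2 ?_)
    simp only [norm_mul, norm_neg, Complex.norm_I, one_mul, Complex.norm_real]
    refine mul_le_mul_of_nonneg_left ?_ (norm_nonneg _)
    exact (norm_inner_le_norm _ _).trans (mul_le_mul_of_nonneg_left hxR (norm_nonneg _))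
  · exact (Continuous.aestronglyMeasurable (by fun_prop)).mul hm
  · refine ae_of_all _ fun x z hz => ?_
    rw [norm_mul, norm_mul]
    by_cases hx : f x = 0
    · simp [hx]
    refine mul_le_mul_of_nonneg_right ?_ (norm_nonneg _)
    have hxR : ‖x‖ ≤ R := by simpa using hs hx
    have hin : ‖(⟪u, x⟫ : ℝ)‖ ≤ ‖u‖ * R :=
      (norm_inner_le_norm _ _).trans (mul_le_mul_of_nonneg_left hxR (norm_nonneg _))
    have hzz : ‖z‖ ≤ ‖z₀‖ + 1 := by
      have h1 : ‖z - z₀‖ < 1 := by simpa [dist_eq_norm] using hz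
      have h2 := norm_add_le z₀ (z - z₀)
      rw [add_sub_cancel] at h2
      linarith
    refine mul_le_mul ?_ ?_ (norm_nonneg _) (Real.exp_pos _).le
    · refine (Complex.norm_exp_le_exp_norm _).trans (Real.exp_le_exp.2 ?_)
      simp only [norm_mul, norm_neg, Complex.norm_I, one_mul, Complex.norm_real]
      exact mul_le_mul hzz hin (norm_nonneg _) (by positivity)
    · simpa only [norm_mul, norm_neg, Complex.norm_I, one_mul, Complex.norm_real] using hin
  · exact hf.1.norm.const_mul _
  · refine ae_of_all _ fun x z _ => ?_
    refine HasDerivAt.mul_const (HasDerivAt.cexp ?_) _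
    simpa using ((hasDerivAt_id z).const_mul (-Complex.I)).mul_const ((⟪u, x⟫ : ℝ) : ℂ)

lemma FT_zero_of_near {d : ℕ} {f : Ed d → ℂ} {R : ℝ} (hR : 0 ≤ R) (hf : IB f)
    (hs : Function.support f ⊆ Metric.closedBall (0 : Ed d) R)
    (h0 : ∀ᶠ u in nhds (0 : Ed d), FT f u = 0) (u : Ed d) : FT f u = 0 := by
  set g : ℂ → ℂ := fun z : ℂ => ∫ x, Complex.exp (-Complex.I * z * (⟪u, x⟫ : ℝ)) * f x with hg
  have hgt : ∀ t : ℝ, g t = FT f (t • u) := by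
    intro t
    simp only [hg, FT]
    congr 1 with x
    rw [inner_smul_left]
    congr 2
    simp [mul_assoc]
  have hd : AnalyticOnNhd ℂ g Set.univ :=
    (FT_line hR hf hs u).differentiableOn.analyticOnNhd isOpen_univ
  have hev : ∀ᶠ t : ℝ in nhds 0, g t = 0 := by
    have hc : Filter.Tendsto (fun t : ℝ => t • u) (nhds 0) (nhds 0) := by
      have : Continuous (fun t : ℝ => t • u) := by fun_prop
      simpa using this.tendsto 0
    filter_upwards [hc.eventually h0] with t ht
    rw [hgt, ht]
  have hfr : ∃ᶠ z in nhdsWithin (0 : ℂ) {0}ᶜ, g z = 0 := by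
    have hev' : ∀ᶠ t : ℝ in nhdsWithin 0 {0}ᶜ, g t = 0 := hev.filter_mono nhdsWithin_le_nhds
    have ht : Filter.Tendsto (fun t : ℝ => (t : ℂ)) (nhdsWithin 0 {0}ᶜ)
        (nhdsWithin (0 : ℂ) {0}ᶜ) := by
      apply tendsto_nhdsWithin_of_tendsto_nhds_of_eventually_within
      · have := Complex.continuous_ofReal.tendsto 0
        simpa using this.mono_left nhdsWithin_le_nhds
      · filter_upwards [self_mem_nhdsWithin] with t ht
        simpa using ht
    exact ht.frequently hev'.frequently
  have := hd.eqOn_zero_of_preconnected_of_frequently_eq_zero isPreconnected_univ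
    (Set.mem_univ 0) hfr (Set.mem_univ (1 : ℂ))
  have h1 := hgt 1
  simp only [Complex.ofReal_one, one_smul] at h1
  rw [← h1]; exact this

lemma Jd_zero (d : ℕ) : Jd d 0 ≠ 0 := by
  unfold Jd
  simp only [inner_zero_left, Complex.ofReal_zero, mul_zero, Complex.exp_zero]
  simp only [integral_const, measureReal_restrict_apply_univ]
  simp only [Complex.real_smul, mul_one, Complex.ofReal_re]
  exact (ENNReal.toReal_pos (Metric.measure_closedBall_pos _ _ one_pos).ne'
    measure_closedBall_lt_top.ne).ne'

lemma pos {d : ℕ} {f : Ed d → ℂ} {R : ℝ} (hR : 0 ≤ R) (hf : IB f)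
    (hs : Function.support f ⊆ Metric.closedBall (0 : Ed d) R)
    (hne : ¬ f =ᵐ[volume] 0) : 0 < ∫ u, ‖FT f u‖ ^ 2 * Jd d u ^ 2 ∂volume := by
  have hnn : ∀ u, 0 ≤ ‖FT f u‖ ^ 2 * Jd d u ^ 2 := fun u => by positivity
  refine lt_of_le_of_ne (integral_nonneg hnn) fun h => hne ?_
  have h1 := (integral_eq_zero_iff_of_nonneg hnn (int_sq hf)).1 h.symm
  have hJ := Jd_cont d
  have c1 := FT_cont hf.1
  have h2 := Continuous.ae_eq_iff_eq volume (by fun_prop) continuous_const |>.1 h1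
  apply ae_zero_of_FT hf
  apply FT_zero_of_near hR hf hs
  filter_upwards [hJ.continuousAt.eventually_ne (Jd_zero d)] with u hu
  have : ‖FT f u‖ ^ 2 * Jd d u ^ 2 = 0 := congrFun h2 u
  simpa [hu] using this

/-- Theorem 7 (non-rigidity part): for `ρ > 2`, any bounded measurable `f` supported in
`B(0,ρ-2)` which is not a.e. zero is orthogonal (in `L²(J_d²·Leb)`) to every bounded
measurable compactly supported `h` supported outside `B(0,ρ)`; hence the approximation
error is bounded below by `∫ |f̂|² J_d² > 0`, and the measure `J_d²·Leb` does not induce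
linear maximal rigidity on `B(0,ρ)`. -/
theorem triangle_field_not_rigid {d : ℕ} (hd : 1 ≤ d) (ρ : ℝ) (hρ : 2 < ρ)
    (f : Ed d → ℂ) (hf_meas : Measurable f) (hf_bdd : ∃ C : ℝ, ∀ x, ‖f x‖ ≤ C)
    (hf_supp : Function.support f ⊆ Metric.closedBall (0 : Ed d) (ρ - 2))
    (hf_ne : ¬ f =ᵐ[volume] 0) :
    (∀ h : Ed d → ℂ, IsCBS (Metric.closedBall (0 : Ed d) ρ)ᶜ h →
        (∫ u, FT f u * (starRingEnd ℂ) (FT h u) * ((Jd d u : ℝ) : ℂ) ^ 2 ∂volume) = 0 ∧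
        (∫ u, ‖FT f u‖ ^ 2 * Jd d u ^ 2 ∂volume)
          ≤ ∫ u, ‖FT f u - FT h u‖ ^ 2 * Jd d u ^ 2 ∂volume) ∧
      (0 < ∫ u, ‖FT f u‖ ^ 2 * Jd d u ^ 2 ∂volume) ∧
      ¬ LMR (volume.withDensity fun u => ENNReal.ofReal (Jd d u ^ 2))
          (Metric.closedBall (0 : Ed d) ρ) := by
  have hf : IB f := IB_of_bdd hf_meas hf_bdd (Metric.isBounded_closedBall.subset hf_supp)
  have hA : ∀ h : Ed d → ℂ, IsCBS (Metric.closedBall (0 : Ed d) ρ)ᶜ h →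
        (∫ u, FT f u * (starRingEnd ℂ) (FT h u) * ((Jd d u : ℝ) : ℂ) ^ 2 ∂volume) = 0 ∧
        (∫ u, ‖FT f u‖ ^ 2 * Jd d u ^ 2 ∂volume)
          ≤ ∫ u, ‖FT f u - FT h u‖ ^ 2 * Jd d u ^ 2 ∂volume := by
    intro h hh
    have hI : IB h := IB_of_bdd hh.1 hh.2.1 hh.2.2.1
    have h0 := orth hf hI hf_supp hh.2.2.2
    exact ⟨h0, ineq hf hI h0⟩
  have hpos := pos (by linarith) hf hf_supp hf_ne
  refine ⟨hA, hpos, fun hL => ?_⟩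
  obtain ⟨h, hh, hlt⟩ := hL f ⟨hf_meas, hf_bdd, Metric.isBounded_closedBall.subset hf_supp,
    hf_supp.trans (Metric.closedBall_subset_closedBall (by linarith))⟩ _ hpos
  have hm : Measurable fun u => ENNReal.ofReal (Jd d u ^ 2) :=
    ((Jd_cont d).measurable.pow_const 2).ennreal_ofReal
  rw [integral_withDensity_eq_integral_toReal_smul hm
    (ae_of_all _ fun _ => ENNReal.ofReal_lt_top)] at hlt
  refine absurd hlt (not_lt.2 ((hA h hh).2.trans (le_of_eq ?_)))
  congr 1 with u
  rw [ENNReal.toReal_ofReal (sq_nonneg _), smul_eq_mul, mul_comm]
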